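/- arXiv:2112.15096 — 6 statements merged into one kernel-verified Lean document; each statement's English description precedes it below -/
import Mathlib

section
/- Let λ be a partition sequence of length ℓ whose last value satisfies v_ℓ = ℓ (i.e., ℓ is a part), and suppose λ is unrefinable. Then the number of missing parts of λ is at most ⌊ℓ/2⌋. -/
/-!
Pair each `x ∈ {1, …, ℓ - 1}` with `ℓ - x`. Two distinct missing parts cannot form such a pair,
since they would refine the part `ℓ`. Hence `x ↦ min x (ℓ - x)` is injective on the missing parts,
and its values lie in `{1, …, ⌊ℓ/2⌋}`. The possible fixed point `x = ℓ/2` causes no trouble, as it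
is alone in its class.
-/

/-- A *partition sequence*: positions `1, …, len`, where position `i` carries either
the value `i` (then `i` is a part) or `⋆` (then `i` is a missing part).
It is encoded by its length together with the set of its parts. -/
structure PartitionSeq where
  len : ℕ
  parts : Finset ℕ
  parts_subset : parts ⊆ Finset.Icc 1 len

namespace PartitionSeq

/-- `x` is a missing part of `l`, i.e. `1 ≤ x ≤ len` and `x` is not a part. -/
def Missing (l : PartitionSeq) (x : ℕ) : Prop :=
  x ∈ Finset.Icc 1 l.len ∧ x ∉ l.parts

instance (l : PartitionSeq) : DecidablePred l.Missing := fun x =>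
  inferInstanceAs (Decidable (x ∈ Finset.Icc 1 l.len ∧ x ∉ l.parts))

/-- The sum `Σ(l)` of the parts of `l`; `l` represents a partition of `Σ(l)`
into distinct parts. -/
def sum (l : PartitionSeq) : ℕ := l.parts.sum id

/-- The number of missing parts of `l`. -/
def missingCount (l : PartitionSeq) : ℕ := (Finset.Icc 1 l.len \ l.parts).card

/-- The minimal excludant: the smallest missing part of `l`, or `0` if there is none. -/
noncomputable def mex (l : PartitionSeq) : ℕ := sInf {x | l.Missing x}

/-- The part `r` of `l` is refinable: `r` is the sum of `t > 1` pairwise distinct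
missing parts of `l`. -/
def IsRefinablePart (l : PartitionSeq) (r : ℕ) : Prop :=
  r ∈ l.parts ∧ ∃ S : Finset ℕ, (∀ x ∈ S, l.Missing x) ∧ 2 ≤ S.card ∧ S.sum id = r

/-- `l` is refinable when some part of `l` admits a refinement. -/
def Refinable (l : PartitionSeq) : Prop := ∃ r, l.IsRefinablePart r

/-- `l` is unrefinable when no part of `l` admits a refinement. -/
def Unrefinable (l : PartitionSeq) : Prop := ¬ l.Refinable

end PartitionSeq

/-- Let `λ` be a partition sequence of length `ℓ` with `v_ℓ = ℓ` which is unrefinable.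
Then the number of missing parts of `λ` is at most `⌊ℓ/2⌋`. -/
theorem missingCount_le_half_len (l : PartitionSeq)
    (hlast : l.len ∈ l.parts) (hunref : l.Unrefinable) :
    l.missingCount ≤ l.len / 2 := by
  have hlt : ∀ x, x ∈ Finset.Icc 1 l.len \ l.parts → 1 ≤ x ∧ x < l.len := by
    intro x hx
    rw [Finset.mem_sdiff, Finset.mem_Icc] at hx
    have hne : x ≠ l.len := fun h => hx.2 (h ▸ hlast)
    omega
  have hpair : ∀ x ∈ Finset.Icc 1 l.len \ l.parts, ∀ y ∈ Finset.Icc 1 l.len \ l.parts,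
      x + y = l.len → x = y := by
    intro x hx y hy hxy
    by_contra hne
    refine hunref ⟨l.len, hlast, {x, y}, ?_, (Finset.card_pair hne).ge, ?_⟩
    · intro z hz
      rw [Finset.mem_insert, Finset.mem_singleton] at hz
      rcases hz with rfl | rfl
      · exact Finset.mem_sdiff.mp hx
      · exact Finset.mem_sdiff.mp hy
    · simpa [Finset.sum_pair hne] using hxy
  have hcard : (Finset.Icc 1 l.len \ l.parts).card ≤ (Finset.Icc 1 (l.len / 2)).card := by
    refine Finset.card_le_card_of_injOn (fun x => min x (l.len - x)) ?_ ?_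
    · intro x hx
      have hb := hlt x hx
      rw [Finset.mem_coe, Finset.mem_Icc]
      dsimp only
      omega
    · intro x hx y hy hxy
      have hbx := hlt x hx
      have hby := hlt y hy
      have hp := hpair x hx y hy
      dsimp only at hxy
      omega
  simpa [PartitionSeq.missingCount] using hcard
end

section
/- Let λ be a partition sequence of length ℓ with v_ℓ = ℓ representing an unrefinable partition, and let k be the number of parts of λ. Then k ≤ ℓ ≤ 2k. -/
/-- Let `λ` be a partition sequence of length `ℓ` with `v_ℓ = ℓ` representing an
unrefinable partition, and let `k` be its number of parts. Then `k ≤ ℓ ≤ 2k`. -/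
theorem card_parts_le_len_le_two_mul (l : PartitionSeq)
    (hlast : l.len ∈ l.parts) (hunref : l.Unrefinable) :
    l.parts.card ≤ l.len ∧ l.len ≤ 2 * l.parts.card := by
  have hcard := Finset.card_sdiff_add_card_eq_card l.parts_subset
  rw [Nat.card_Icc, Nat.add_sub_cancel] at hcard
  have hinj : (Finset.Icc 1 l.len \ l.parts).card ≤ l.parts.card := by
    refine Finset.card_le_card_of_injOn
      (fun x => if 2 * x = l.len then l.len else l.len - x) ?_ ?_
    · intro x hx
      simp only [Finset.coe_sdiff, Set.mem_sdiff, Finset.mem_coe, Finset.mem_Icc] at hx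
      obtain ⟨⟨hx1, hx2⟩, hxp⟩ := hx
      have hne : x ≠ l.len := fun h => hxp (h ▸ hlast)
      by_cases h : 2 * x = l.len
      · simpa [h] using hlast
      · simp only [h, if_false, Finset.mem_coe]
        by_contra hy
        have hxy : x ≠ l.len - x := by omega
        refine hunref ⟨l.len, hlast, {x, l.len - x}, ?_, ?_, ?_⟩
        · intro z hz
          rw [Finset.mem_insert, Finset.mem_singleton] at hz
          rcases hz with rfl | rfl
          · exact ⟨Finset.mem_Icc.mpr ⟨hx1, hx2⟩, hxp⟩
          · exact ⟨Finset.mem_Icc.mpr ⟨by omega, by omega⟩, hy⟩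
        · rw [Finset.card_pair hxy]
        · rw [Finset.sum_pair hxy]
          simp only [id]
          omega
    · intro x hx y hy hxy
      simp only [Finset.coe_sdiff, Set.mem_sdiff, Finset.mem_coe, Finset.mem_Icc] at hx hy
      dsimp only at hxy
      split_ifs at hxy <;> omega
  omega
end

section
/- If a partition sequence λ has some refinable part, then its smallest refinable part r admits a refinement of the form r = a + b, where a and b are two distinct missing parts of λ. -/
/-- If a partition sequence has some refinable part, then its smallest refinable part
`r` admits a refinement of the form `r = a + b` with `a, b` distinct missing parts. -/
theorem smallest_refinable_part_eq_add (l : PartitionSeq) (h : l.Refinable) :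
    ∃ a b : ℕ, l.Missing a ∧ l.Missing b ∧ a ≠ b ∧
      sInf {r | l.IsRefinablePart r} = a + b := by
  classical
  obtain ⟨hr, S, hS, hcard, hsum⟩ : l.IsRefinablePart (sInf {r | l.IsRefinablePart r}) :=
    Nat.sInf_mem h
  have hmin : ∀ q, l.IsRefinablePart q → sInf {r | l.IsRefinablePart r} ≤ q :=
    fun q hq => Nat.sInf_le hq
  generalize sInf {r | l.IsRefinablePart r} = r at *
  -- At most one element of `S` is half of `r`.
  obtain ⟨a, haS, har⟩ : ∃ a ∈ S, 2 * a ≠ r := by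
    obtain ⟨x, hx, y, hy, hxy⟩ := Finset.one_lt_card.mp hcard
    by_cases h2 : 2 * x = r
    · exact ⟨y, hy, by omega⟩
    · exact ⟨x, hx, h2⟩
  have hadd : a + (S.erase a).sum id = r := by
    rw [← hsum]
    exact Finset.add_sum_erase S id haS
  have hcard' : (S.erase a).card + 1 = S.card := Finset.card_erase_add_one haS
  have hE : ∀ x ∈ S.erase a, l.Missing x := fun x hx => hS x (Finset.mem_of_mem_erase hx)
  have ha1 := Finset.mem_Icc.mp (hS a haS).1
  have hrl := Finset.mem_Icc.mp (l.parts_subset hr)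
  refine ⟨a, (S.erase a).sum id, hS a haS, ?_, by omega, hadd.symm⟩
  by_cases h3 : 2 ≤ (S.erase a).card
  · obtain ⟨y, hy⟩ : (S.erase a).Nonempty := Finset.card_pos.mp (by omega)
    have hy1 := Finset.mem_Icc.mp (hE y hy).1
    have hle : y ≤ (S.erase a).sum id :=
      Finset.single_le_sum (f := id) (fun _ _ => Nat.zero_le _) hy
    refine ⟨Finset.mem_Icc.mpr ⟨by omega, by omega⟩, fun hp => ?_⟩
    have := hmin _ ⟨hp, S.erase a, hE, h3, rfl⟩
    omega
  · obtain ⟨b, hb⟩ := Finset.card_eq_one.mp (show (S.erase a).card = 1 by omega)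
    have := hE b (by simp [hb])
    simpa [hb] using this
end

section
/- A partition sequence λ is refinable if and only if there exist a part r of λ and two distinct missing parts a, b of λ with r = a + b. -/
/-- A refinement of a part yields a part, possibly a smaller one, that is the sum of two distinct
missing parts. -/
lemma PartitionSeq.exists_pair_of_refinement (l : PartitionSeq) (n : ℕ) :
    ∀ S : Finset ℕ, S.card = n → (∀ x ∈ S, l.Missing x) → 2 ≤ S.card → S.sum id ∈ l.parts →
      ∃ r a b : ℕ, r ∈ l.parts ∧ l.Missing a ∧ l.Missing b ∧ a ≠ b ∧ r = a + b := by
  induction n with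
  | zero => intro S h0 _ h2; omega
  | succ n ih =>
    intro S hn hmiss hcard hsum
    have hne : S.Nonempty := Finset.card_pos.mp (by omega)
    set a := S.min' hne
    have ha : a ∈ S := S.min'_mem hne
    have hcard' : (S.erase a).card = n := by rw [Finset.card_erase_of_mem ha]; omega
    have hmiss' : ∀ x ∈ S.erase a, l.Missing x := fun x hx => hmiss x (Finset.mem_of_mem_erase hx)
    have hadd : a + (S.erase a).sum id = S.sum id := Finset.add_sum_erase S id ha
    obtain ⟨c, hc⟩ : (S.erase a).Nonempty := Finset.card_pos.mp (by omega)
    have hac : a < c := S.min'_lt_of_mem_erase_min' hne hc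
    have hcs : c ≤ (S.erase a).sum id :=
      Finset.single_le_sum (f := id) (fun _ _ => Nat.zero_le _) hc
    by_cases hs : (S.erase a).sum id ∈ l.parts
    · refine ih _ hcard' hmiss' ?_ hs
      by_contra hlt
      obtain ⟨d, hd⟩ := Finset.card_eq_one.mp (show (S.erase a).card = 1 by omega)
      rw [hd, Finset.sum_singleton] at hs
      exact (hmiss' d (by simp [hd])).2 hs
    · have hr := Finset.mem_Icc.mp (l.parts_subset hsum)
      exact ⟨_, a, _, hsum, hmiss a ha, ⟨Finset.mem_Icc.mpr (by omega), hs⟩, by omega, hadd.symm⟩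

/-- A partition sequence is refinable iff some part is the sum of two
distinct missing parts. -/
theorem refinable_iff_exists_pair (l : PartitionSeq) :
    l.Refinable ↔ ∃ r a b : ℕ, r ∈ l.parts ∧ l.Missing a ∧ l.Missing b ∧
      a ≠ b ∧ r = a + b := by
  constructor
  · rintro ⟨r, hr, S, hmiss, hcard, rfl⟩
    exact l.exists_pair_of_refinement _ S rfl hmiss hcard hr
  · rintro ⟨r, a, b, hr, ha, hb, hab, rfl⟩
    refine ⟨a + b, hr, {a, b}, ?_, (Finset.card_pair hab).ge, Finset.sum_pair hab⟩
    simp [ha, hb]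
end

section
/- Let λ be an unrefinable partition sequence of length ℓ with minimal excludant μ = mex(λ) ≥ 1, and let a be a missing part of λ with a ≠ μ. Then for every integer t ≥ 1 with a + tμ ≤ ℓ, the number a + tμ is a missing part of λ. Consequently, every part r of λ with r > μ is strictly smaller than every missing part a ≠ μ of λ that satisfies r ≡ a (mod μ). -/
theorem PartitionSeq.missing_mex (l : PartitionSeq) (hmex : 1 ≤ l.mex) :
    l.Missing l.mex :=
  Nat.sInf_mem (Nat.nonempty_of_pos_sInf hmex)

theorem PartitionSeq.Unrefinable.missing_add {l : PartitionSeq} (hunref : l.Unrefinable)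
    {b c : ℕ} (hb : l.Missing b) (hc : l.Missing c) (hbc : b ≠ c) (hle : b + c ≤ l.len) :
    l.Missing (b + c) := by
  have hb1 := (Finset.mem_Icc.mp hb.1).1
  refine ⟨Finset.mem_Icc.mpr ⟨by omega, hle⟩, fun hpart => hunref ⟨b + c, hpart, {b, c}, ?_, ?_, ?_⟩⟩
  · simp [hb, hc]
  · rw [Finset.card_pair hbc]
  · simp [Finset.sum_pair hbc]

/-- In an unrefinable partition sequence with minimal excludant `μ ≥ 1`, for a missing
part `a ≠ μ` all the numbers `a + tμ ≤ ℓ` (with `t ≥ 1`) are missing parts;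
consequently every part `r > μ` is strictly smaller than every missing part
`a ≠ μ` congruent to `r` modulo `μ`. -/
theorem missing_add_mul_mex (l : PartitionSeq) (hunref : l.Unrefinable)
    (hmex : 1 ≤ l.mex) (a : ℕ) (ha : l.Missing a) (hane : a ≠ l.mex) :
    (∀ t : ℕ, 1 ≤ t → a + t * l.mex ≤ l.len → l.Missing (a + t * l.mex)) ∧
    (∀ r : ℕ, r ∈ l.parts → l.mex < r → r % l.mex = a % l.mex → r < a) := by
  have key : ∀ t : ℕ, a + t * l.mex ≤ l.len → l.Missing (a + t * l.mex) := by
    intro t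
    induction t with
    | zero => simpa using fun _ => ha
    | succ t ih =>
      intro hle
      have ha1 := (Finset.mem_Icc.mp ha.1).1
      have hne : a + t * l.mex ≠ l.mex := by
        rcases t with _ | t
        · simpa using hane
        · rw [Nat.succ_mul]; omega
      rw [Nat.succ_mul, ← Nat.add_assoc] at hle ⊢
      exact hunref.missing_add (ih (by omega)) (l.missing_mex hmex) hne hle
  refine ⟨fun t _ => key t, fun r hr _ hmod => ?_⟩
  by_contra! har
  obtain ⟨t, ht⟩ := (Nat.modEq_iff_dvd' har).mp (Nat.ModEq.symm hmod)
  obtain rfl : r = a + t * l.mex := by rw [Nat.mul_comm t]; omega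
  exact (key t (Finset.mem_Icc.mp (l.parts_subset hr)).2).2 hr
end

section
/- Let λ be an unrefinable partition sequence of length ℓ with v_ℓ = ℓ and sum Σ(λ) = N. Then ℓ(ℓ+2) ≤ 8N; in particular ℓ = O(√N). -/
/-- In an unrefinable sequence whose last position is a part, each pair `i`, `len - i` of distinct
positions contains a part. -/
theorem PartitionSeq.Unrefinable.mem_or_sub_mem {l : PartitionSeq} (hunref : l.Unrefinable)
    (hlast : l.len ∈ l.parts) {i : ℕ} (hi : 1 ≤ i) (hil : 2 * i < l.len) :
    i ∈ l.parts ∨ l.len - i ∈ l.parts := by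
  by_contra! h
  have hne : i ≠ l.len - i := by omega
  refine hunref ⟨l.len, hlast, {i, l.len - i}, ?_, ?_, ?_⟩
  · intro x hx
    rcases Finset.mem_insert.1 hx with rfl | hx
    · exact ⟨Finset.mem_Icc.2 ⟨hi, by omega⟩, h.1⟩
    · rw [Finset.mem_singleton.1 hx]
      exact ⟨Finset.mem_Icc.2 ⟨by omega, by omega⟩, h.2⟩
  · rw [Finset.card_pair hne]
  · rw [Finset.sum_pair hne]
    simp only [id]
    omega

/-- If `λ` is an unrefinable partition sequence of length `ℓ` with `v_ℓ = ℓ` and sum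
`N`, then `ℓ(ℓ+2) ≤ 8N` (so `ℓ = O(√N)`). -/
theorem len_mul_le_eight_sum (l : PartitionSeq) (N : ℕ)
    (hlast : l.len ∈ l.parts) (hunref : l.Unrefinable) (hsum : l.sum = N) :
    l.len * (l.len + 2) ≤ 8 * N := by
  have hpos : 1 ≤ l.len := (Finset.mem_Icc.1 (l.parts_subset hlast)).1
  obtain ⟨k, hk⟩ : ∃ k, l.len = 2 * k + 1 ∨ l.len = 2 * k + 2 := ⟨(l.len - 1) / 2, by omega⟩
  -- `f i` is the part chosen from the pair `i + 1`, `len - (i + 1)`.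
  let f : ℕ → ℕ := fun i => if i + 1 ∈ l.parts then i + 1 else l.len - (i + 1)
  have hf : ∀ i, f i = i + 1 ∨ f i = l.len - (i + 1) := fun i => by
    by_cases h : i + 1 ∈ l.parts <;> simp [f, h]
  have hinj : Set.InjOn f (Finset.range k) := by
    intro i hi j hj hij
    have hi := Finset.mem_range.1 hi
    have hj := Finset.mem_range.1 hj
    have := hf i
    have := hf j
    omega
  have hsub : (Finset.range k).image f ⊆ l.parts.erase l.len := by
    intro x hx
    obtain ⟨i, hi, rfl⟩ := Finset.mem_image.1 hx
    have hi := Finset.mem_range.1 hi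
    refine Finset.mem_erase.2 ⟨?_, ?_⟩
    · have := hf i
      omega
    · by_cases h : i + 1 ∈ l.parts
      · simp [f, h]
      · simpa [f, h] using (hunref.mem_or_sub_mem hlast (i := i + 1) (by omega)
          (by omega)).resolve_left h
  have h1 : ∑ i ∈ Finset.range k, (i + 1) ≤ ∑ x ∈ l.parts.erase l.len, id x :=
    calc ∑ i ∈ Finset.range k, (i + 1) ≤ ∑ i ∈ Finset.range k, id (f i) := by
          refine Finset.sum_le_sum fun i hi => ?_
          have hi := Finset.mem_range.1 hi
          have := hf i
          simp only [id]
          omega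
      _ = ∑ x ∈ (Finset.range k).image f, id x := (Finset.sum_image hinj).symm
      _ ≤ _ := Finset.sum_le_sum_of_subset hsub
  have h2 : ∑ x ∈ l.parts.erase l.len, id x + l.len = N := by
    rw [← hsum]
    exact Finset.sum_erase_add l.parts id hlast
  have h3 : ∀ n : ℕ, 2 * ∑ i ∈ Finset.range n, (i + 1) = n * (n + 1) := fun n => by
    induction n with
    | zero => rfl
    | succ n ih => rw [Finset.sum_range_succ, mul_add, ih]; ring
  have h3 := h3 k
  have h4 : ∑ i ∈ Finset.range k, (i + 1) + l.len ≤ N := by omega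
  rcases hk with hk | hk <;> rw [hk] at h4 ⊢ <;> nlinarith
end
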